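/- Let m be a nonnegative integer and n a positive integer with n ≡ 3 (mod 4). Then Φ_n(q)^2 divides (in the localization of ℚ[q] at Φ_n(q)) the sum over k from 0 to mn+(n-1)/2 of (1+q^{4k+1})(q^2;q^4)_k^3 / ((1+q)(q^4;q^4)_k^3) · q^k. -/

import Mathlib

open Polynomial Finset

/-- The variable `q` as an element of the field of rational functions `ℚ(q)`. -/
noncomputable def Q : RatFunc ℚ := RatFunc.X

/-- The q-shifted factorial `(a;b)_k = (1-a)(1-ab)⋯(1-ab^{k-1})` in `ℚ(q)`. -/
noncomputable def qPoch (a b : RatFunc ℚ) (k : ℕ) : RatFunc ℚ :=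
  ∏ i ∈ Finset.range k, (1 - a * b ^ i)

/-!
Over `ℚ(q)`, the `Φ_n`-adic valuation turns the claim into an ultrametric estimate, so the sum may
be cut into blocks starting at multiples `k` of `n`. In the second half of a block every term
contains the cube of a product divisible by `Φ_n`. In the first half, put `x = q^{4k}` and
`y = q^{2n}`, both congruent to `1` modulo `Φ_n`. The cube of the ratio
`(1 - x q^{4i+2}) / (1 - x q^{4i+4})` agrees modulo `Φ_n^2` with the product of three ratios in
which the factors `x` are replaced by `x²`, `xy`, `y⁻¹` in the numerator and by `1`, `x²y`, `xy⁻¹`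
in the denominator. After this replacement the half-block is a terminating `q`-Dixon sum, whose
product evaluation has the numerator factors `1 - q^{8k+2n}` and, because `n ≡ 3 (mod 4)`,
also `1 - q^{-n}`.
-/

section Dixon

variable {K : Type*} [Field K]

/-- The part of the ratio of consecutive terms of the terminating `q`-Dixon sum that does not
depend on the length of the sum. -/
def dixonFactor (s w p : K) (i : ℕ) : K :=
  (1 - s ^ 2 * p ^ i) * (w - s * p ^ i) * p / ((1 - p ^ (i + 1)) * (1 - s * w * p ^ (i + 1)))

/-- The ratio of consecutive terms of the `q`-Dixon sum in base `p`, with parameters `a = s²`,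
`b = 1 / P` and `c = s / w` in the classical notation. -/
def dixonRatio (s w p P : K) (i : ℕ) : K :=
  dixonFactor s w p i * ((P - p ^ i) / (1 - s ^ 2 * P * p ^ (i + 1)))

/-- The `k`-th term of the `q`-Dixon sum, scaled so that the zeroth one is `1 + s`. -/
def dixonTerm (s w p P : K) (k : ℕ) : K :=
  (1 + s * p ^ k) * ∏ i ∈ range k, dixonRatio s w p P i

/-- The product in the telescoping certificate relating the `q`-Dixon sums at `P` and `P * p`. -/
def dixonCertificate (s w p P : K) (k : ℕ) : K :=
  ∏ i ∈ range k, dixonFactor s w p i * ((P - p ^ i) / (1 - s ^ 2 * P * p ^ (i + 2)))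

variable {s w p P : K}

lemma dixonCertificate_succ (k : ℕ) :
    dixonCertificate s w p P (k + 1) = dixonCertificate s w p P k *
      (dixonFactor s w p k * ((P - p ^ k) / (1 - s ^ 2 * P * p ^ (k + 2)))) :=
  prod_range_succ _ _

lemma prod_dixonRatio_mul (hP : ∀ i : ℕ, 1 - s ^ 2 * P * p ^ (i + 1) ≠ 0) (k : ℕ) :
    (∏ i ∈ range k, dixonRatio s w p P i) * (1 - s ^ 2 * P * p) =
      dixonCertificate s w p P k * (1 - s ^ 2 * P * p ^ (k + 1)) := by
  induction k with
  | zero => simp [dixonCertificate]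
  | succ k ih =>
    have hden := div_mul_cancel₀ (P - p ^ k) (hP k)
    have hden_succ := div_mul_cancel₀ (P - p ^ k) (hP (k + 1))
    rw [prod_range_succ, mul_right_comm, ih, dixonRatio, dixonCertificate_succ]
    linear_combination dixonCertificate s w p P k * dixonFactor s w p k * (hden - hden_succ)

lemma prod_dixonRatio_succ (k : ℕ) :
    ∏ i ∈ range (k + 1), dixonRatio s w p (P * p) i =
      dixonCertificate s w p P k * dixonFactor s w p k *
        ((P * p - 1) * p ^ k / (1 - s ^ 2 * P * p ^ (k + 2))) := by
  induction k with
  | zero =>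
    rw [prod_range_one, dixonRatio, dixonCertificate, prod_range_zero]
    ring
  | succ k ih =>
    rw [prod_range_succ, ih, dixonRatio, dixonCertificate_succ]
    ring

lemma sum_dixonTerm_recurrence (hp : ∀ i : ℕ, 1 - p ^ (i + 1) ≠ 0)
    (hP : ∀ i : ℕ, 1 - s ^ 2 * P * p ^ (i + 1) ≠ 0)
    (hw : ∀ i : ℕ, 1 - s * w * p ^ (i + 1) ≠ 0) (k : ℕ) :
    (1 - s * w * P * p) * (1 - s * P * p) * ∑ i ∈ range (k + 1), dixonTerm s w p (P * p) i -
        (1 - w * P * p) * (1 - s ^ 2 * P * p) * ∑ i ∈ range (k + 1), dixonTerm s w p P i =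
      dixonCertificate s w p P k * (P * p * (1 - s ^ 2 * p ^ k) * (w - s * p ^ k)) := by
  induction k with
  | zero =>
    simp [dixonTerm, dixonCertificate]
    ring
  | succ k ih =>
    set C := dixonCertificate s w p P k
    set A := dixonFactor s w p k
    set g := 1 - s ^ 2 * P * p ^ (k + 2)
    have hfactor : (1 - s ^ 2 * p ^ k) * (w - s * p ^ k) * p =
        A * ((1 - p ^ (k + 1)) * (1 - s * w * p ^ (k + 1))) :=
      (div_mul_cancel₀ _ (mul_ne_zero (hp k) (hw k))).symm
    have hcert : dixonCertificate s w p P (k + 1) = C * A * (P - p ^ k) * g⁻¹ := by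
      rw [dixonCertificate_succ]
      ring
    have hterm_succ : dixonTerm s w p (P * p) (k + 1) =
        (1 + s * p ^ (k + 1)) * (C * A * ((P * p - 1) * p ^ k)) * g⁻¹ := by
      rw [dixonTerm, prod_dixonRatio_succ]
      ring
    have hginv : g * g⁻¹ = 1 := mul_inv_cancel₀ (hP (k + 1))
    have hterm : (1 - s ^ 2 * P * p) * dixonTerm s w p P (k + 1) =
        (1 + s * p ^ (k + 1)) * (C * A * (P - p ^ k)) := by
      have hprod := prod_dixonRatio_mul (w := w) hP (k + 1)
      rw [hcert] at hprod
      rw [dixonTerm]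
      linear_combination (1 + s * p ^ (k + 1)) * (hprod + C * A * (P - p ^ k) * hginv)
    rw [sum_range_succ, sum_range_succ _ (k + 1), hcert, hterm_succ]
    linear_combination ih - (1 - w * P * p) * hterm + C * P * hfactor +
      C * A * (P * (1 - p ^ (k + 1)) * (1 - s * w * p ^ (k + 1)) -
        (1 - w * P * p) * (1 + s * p ^ (k + 1)) * (P - p ^ k)) * (-hginv)

lemma sum_dixonTerm_pow (hp : ∀ i : ℕ, 1 - p ^ (i + 1) ≠ 0)
    (hs : ∀ i : ℕ, 1 - s ^ 2 * p ^ (i + 1) ≠ 0) (hw : ∀ i : ℕ, 1 - s * w * p ^ (i + 1) ≠ 0)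
    (N : ℕ) :
    ∑ i ∈ range (N + 1), dixonTerm s w p (p ^ N) i =
      (1 + s) * ∏ i ∈ range N, (1 - s ^ 2 * p ^ (i + 1)) * (1 - w * p ^ (i + 1)) /
        ((1 - s * w * p ^ (i + 1)) * (1 - s * p ^ (i + 1))) := by
  induction N with
  | zero => simp [dixonTerm]
  | succ N ih =>
    have hsN (i : ℕ) : 1 - s ^ 2 * p ^ N * p ^ (i + 1) ≠ 0 := by
      convert hs (N + i) using 2
      ring
    have hs' : 1 - s * p ^ (N + 1) ≠ 0 := fun h ↦ hs (2 * N + 1) (by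
      linear_combination (1 + s * p ^ (N + 1)) * h)
    have hterm : dixonTerm s w p (p ^ N) (N + 1) = 0 := by
      simp [dixonTerm, prod_range_succ, dixonRatio]
    have hcert : dixonCertificate s w p (p ^ N) (N + 1) = 0 := by
      simp [dixonCertificate_succ]
    have hrec := sum_dixonTerm_recurrence hp hsN hw (N + 1)
    rw [sum_range_succ (dixonTerm s w p (p ^ N)), hterm, hcert, add_zero, zero_mul, ih,
      ← pow_succ, sub_eq_zero] at hrec
    rw [prod_range_succ, ← mul_assoc, mul_div_assoc', eq_div_iff (mul_ne_zero (hw N) hs')]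
    linear_combination hrec

end Dixon

section Valuation

variable {R Γ₀ : Type*} [CommRing R] [LinearOrderedCommMonoidWithZero Γ₀] (v : Valuation R Γ₀)

lemma valuation_prod_le {ι : Type*} {s : Finset ι} {f : ι → R}
    {γ : Γ₀} {i : ι} (hi : i ∈ s) (hf : ∀ j ∈ s, v (f j) ≤ 1) (hγ : v (f i) ≤ γ) :
    v (∏ j ∈ s, f j) ≤ γ := by
  classical
  rw [← mul_prod_erase s f hi, map_mul, map_prod]
  exact (mul_le_mul' hγ (prod_le_one' fun j hj ↦ hf j (mem_of_mem_erase hj))).trans_eq (mul_one γ)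

lemma valuation_mul_sub_mul_le {a b c d : R} {γ : Γ₀}
    (ha : v a ≤ 1) (hd : v d ≤ 1) (hac : v (a - c) ≤ γ) (hbd : v (b - d) ≤ γ) :
    v (a * b - c * d) ≤ γ := by
  rw [show a * b - c * d = a * (b - d) + (a - c) * d by ring]
  refine v.map_add_le ?_ ?_
  · rw [map_mul]
    exact (mul_le_mul' ha hbd).trans_eq (one_mul γ)
  · rw [map_mul]
    exact (mul_le_mul' hac hd).trans_eq (mul_one γ)

lemma valuation_prod_sub_prod_le {ι : Type*} {s : Finset ι}
    {f g : ι → R} {γ : Γ₀} (hf : ∀ i ∈ s, v (f i) ≤ 1) (hg : ∀ i ∈ s, v (g i) ≤ 1)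
    (hfg : ∀ i ∈ s, v (f i - g i) ≤ γ) : v (∏ i ∈ s, f i - ∏ i ∈ s, g i) ≤ γ := by
  classical
  induction s using Finset.induction_on with
  | empty => simp
  | insert i s hi ih =>
    simp only [forall_mem_insert] at hf hg hfg
    rw [prod_insert hi, prod_insert hi]
    refine valuation_mul_sub_mul_le v hf.1 ?_ hfg.1 (ih hf.2 hg.2 hfg.2)
    rw [map_prod]
    exact prod_le_one' hg.2

lemma valuation_one_sub_mul_eq_one {α u : R}
    (hα : v (1 - α) < 1) (hu : v u ≤ 1) (hu' : v (1 - u) = 1) : v (1 - α * u) = 1 := by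
  have hlt : v ((1 - α) * u) < v (1 - u) := by
    rw [map_mul, hu']
    exact mul_lt_one_of_lt_of_le hα hu
  rw [← hu', show 1 - α * u = (1 - u) + (1 - α) * u by ring]
  exact v.map_add_eq_of_lt_left hlt

lemma valuation_le_one_of_one_sub_le {a : R} {ε : Γ₀}
    (hε : ε ≤ 1) (ha : v (1 - a) ≤ ε) : v a ≤ 1 := by
  simpa using v.map_sub_le v.map_one.le (ha.trans hε)

lemma valuation_one_sub_mul_le {a b : R} {ε : Γ₀}
    (hε : ε ≤ 1) (ha : v (1 - a) ≤ ε) (hb : v (1 - b) ≤ ε) : v (1 - a * b) ≤ ε := by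
  simpa using valuation_mul_sub_mul_le v v.map_one.le
    (valuation_le_one_of_one_sub_le v hε hb) ha hb

lemma valuation_one_sub_mul_le_one {a u : R}
    (ha : v a ≤ 1) (hu : v u ≤ 1) : v (1 - a * u) ≤ 1 := by
  refine v.map_sub_le v.map_one.le ?_
  rw [map_mul]
  exact mul_le_one' ha hu

lemma valuation_pair_sub_le {α β u : R} {ε : Γ₀}
    (hα : v (1 - α) ≤ ε) (hβ : v (1 - β) ≤ ε) (hu : v u ≤ 1) :
    v ((1 - α * u) * (1 - β * u) - (1 - u) * (1 - α * β * u)) ≤ ε ^ 2 := by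
  rw [show (1 - α * u) * (1 - β * u) - (1 - u) * (1 - α * β * u) = (1 - α) * (1 - β) * u by ring,
    map_mul, map_mul, sq]
  exact (mul_le_mul' (mul_le_mul' hα hβ) hu).trans_eq (mul_one _)

lemma valuation_triple_sub_le {α β γ u : R} {ε : Γ₀}
    (hε : ε ≤ 1) (hα : v (1 - α) ≤ ε) (hβ : v (1 - β) ≤ ε) (hγ : v (1 - γ) ≤ ε) (hu : v u ≤ 1) :
    v ((1 - α * u) * (1 - β * u) * (1 - γ * u) - (1 - u) ^ 2 * (1 - α * β * γ * u)) ≤ ε ^ 2 := by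
  have hαβ : v (1 - α * β) ≤ ε := valuation_one_sub_mul_le v hε hα hβ
  have hγu : v (1 - γ * u) ≤ 1 :=
    valuation_one_sub_mul_le_one v (valuation_le_one_of_one_sub_le v hε hγ) hu
  have hu' : v (1 - u) ≤ 1 := v.map_sub_le v.map_one.le hu
  have hfirst : v (((1 - α * u) * (1 - β * u) - (1 - u) * (1 - α * β * u)) * (1 - γ * u)) ≤
      ε ^ 2 := by
    rw [map_mul]
    exact (mul_le_mul' (valuation_pair_sub_le v hα hβ hu) hγu).trans_eq (mul_one _)
  have hsecond : v ((1 - u) * ((1 - α * β * u) * (1 - γ * u) - (1 - u) * (1 - α * β * γ * u))) ≤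
      ε ^ 2 := by
    rw [map_mul]
    exact (mul_le_mul' hu' (valuation_pair_sub_le v hαβ hγ hu)).trans_eq (one_mul _)
  convert v.map_add_le hfirst hsecond using 2
  ring

lemma valuation_one_sub_cube_sub_triple_le {α β γ x u : R}
    {ε : Γ₀} (hε : ε ≤ 1) (hα : v (1 - α) ≤ ε) (hβ : v (1 - β) ≤ ε) (hγ : v (1 - γ) ≤ ε)
    (hx : v (1 - x) ≤ ε) (hu : v u ≤ 1) (h : α * β * γ = x ^ 3) :
    v ((1 - x * u) ^ 3 - (1 - α * u) * (1 - β * u) * (1 - γ * u)) ≤ ε ^ 2 := by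
  have hcube := valuation_triple_sub_le v hε hx hx hx hu
  have htriple := valuation_triple_sub_le v hε hα hβ hγ hu
  rw [h] at htriple
  convert v.map_sub_le hcube htriple using 2
  ring

end Valuation

section Cyclotomic

open IsDedekindDomain WithZero

lemma cyclotomic_dvd_X_pow_sub_one_iff {n e : ℕ} (hn : 0 < n) (he : 0 < e) :
    cyclotomic n ℚ ∣ X ^ e - 1 ↔ n ∣ e := by
  have hprime := (cyclotomic.irreducible_rat hn).prime
  rw [← prod_cyclotomic_eq_X_pow_sub_one he, hprime.dvd_finsetProd_iff]
  refine ⟨fun ⟨d, hd, hdvd⟩ ↦ ?_, fun h ↦ ⟨n, Nat.mem_divisors.mpr ⟨h, he.ne'⟩, dvd_rfl⟩⟩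
  have hassoc := hprime.irreducible.associated_of_dvd
    (cyclotomic.irreducible_rat (Nat.pos_of_mem_divisors hd)) hdvd
  rw [cyclotomic_injective (R := ℚ) <|
    eq_of_monic_of_associated (cyclotomic.monic n ℚ) (cyclotomic.monic d ℚ) hassoc]
  exact Nat.dvd_of_mem_divisors hd

variable (n : ℕ) [NeZero n]

/-- The prime ideal of `ℚ[X]` generated by the `n`-th cyclotomic polynomial. -/
noncomputable def cyclotomicPrime : HeightOneSpectrum ℚ[X] where
  asIdeal := Ideal.span {cyclotomic n ℚ}
  isPrime := (Ideal.span_singleton_prime (cyclotomic_ne_zero n ℚ)).mpr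
    (cyclotomic.irreducible_rat (NeZero.pos n)).prime
  ne_bot := by simpa using cyclotomic_ne_zero n ℚ

/-- The `Φ_n`-adic valuation on `ℚ(q)`, written multiplicatively: `f` is divisible by `Φ_n ^ k` in
the localization of `ℚ[q]` at `Φ_n` iff its valuation is at most `exp (-1) ^ k`. -/
noncomputable def cyclotomicValuation : Valuation (RatFunc ℚ) ℤᵐ⁰ :=
  (cyclotomicPrime n).valuation (RatFunc ℚ)

variable {n}

lemma cyclotomicValuation_algebraMap_le_one (f : ℚ[X]) :
    cyclotomicValuation n (algebraMap ℚ[X] (RatFunc ℚ) f) ≤ 1 :=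
  (cyclotomicPrime n).valuation_le_one f

lemma cyclotomicValuation_algebraMap_lt_one_iff {f : ℚ[X]} :
    cyclotomicValuation n (algebraMap ℚ[X] (RatFunc ℚ) f) < 1 ↔ cyclotomic n ℚ ∣ f := by
  rw [cyclotomicValuation, HeightOneSpectrum.valuation_lt_one_iff_mem]
  exact Ideal.mem_span_singleton

lemma cyclotomicValuation_cyclotomic :
    cyclotomicValuation n (algebraMap ℚ[X] (RatFunc ℚ) (cyclotomic n ℚ)) = exp (-1) := by
  rw [cyclotomicValuation, HeightOneSpectrum.valuation_of_algebraMap]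
  exact (cyclotomicPrime n).intValuation_singleton (cyclotomic_ne_zero n ℚ) rfl

lemma exists_mul_eq_of_cyclotomicValuation_le {f : RatFunc ℚ} {k : ℕ}
    (hf : cyclotomicValuation n f ≤ exp (-1) ^ k) :
    ∃ a b : ℚ[X], ¬ cyclotomic n ℚ ∣ b ∧ f * algebraMap ℚ[X] (RatFunc ℚ) b =
      algebraMap ℚ[X] (RatFunc ℚ) (cyclotomic n ℚ ^ k * a) := by
  have hΦ : algebraMap ℚ[X] (RatFunc ℚ) (cyclotomic n ℚ ^ k) ≠ 0 := by
    simpa using fun h ↦ absurd h (cyclotomic_ne_zero n ℚ)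
  have hle : cyclotomicValuation n (f / algebraMap ℚ[X] (RatFunc ℚ) (cyclotomic n ℚ ^ k)) ≤ 1 := by
    rw [map_div₀, map_pow, map_pow, cyclotomicValuation_cyclotomic]
    exact div_le_one_of_le₀ hf zero_le
  obtain ⟨a, b, hab⟩ := (cyclotomicPrime n).exists_primeCompl_mul_eq_of_integer _ hle
  refine ⟨a, b, fun h ↦ b.2 (Ideal.mem_span_singleton.mpr h), ?_⟩
  rw [map_mul, ← hab, ← mul_assoc, mul_div_cancel₀ _ hΦ]

lemma one_sub_Q_pow (e : ℕ) : 1 - Q ^ e = - algebraMap ℚ[X] (RatFunc ℚ) (X ^ e - 1) := by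
  simp [Q]

lemma Q_ne_zero : Q ≠ 0 := RatFunc.X_ne_zero

lemma cyclotomicValuation_Q : cyclotomicValuation n Q = 1 := by
  have hlt : cyclotomicValuation n (1 - Q ^ n) < 1 := by
    rw [one_sub_Q_pow, Valuation.map_neg, cyclotomicValuation_algebraMap_lt_one_iff]
    exact cyclotomic.dvd_X_pow_sub_one n ℚ
  have hpow : cyclotomicValuation n Q ^ n = 1 := by
    simpa using (cyclotomicValuation n).map_one_sub_of_lt hlt
  exact (pow_eq_one_iff.mp hpow).resolve_right (NeZero.ne n)

lemma exp_neg_one_lt_one : (exp (-1) : ℤᵐ⁰) < 1 := by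
  rw [← exp_zero, exp_lt_exp]
  norm_num

lemma cyclotomicValuation_Q_zpow (e : ℤ) : cyclotomicValuation n (Q ^ e) = 1 := by
  rw [map_zpow₀, cyclotomicValuation_Q, one_zpow]

lemma cyclotomicValuation_one_sub_Q_zpow_le_one (e : ℤ) :
    cyclotomicValuation n (1 - Q ^ e) ≤ 1 :=
  Valuation.map_sub_le _ (map_one _).le (cyclotomicValuation_Q_zpow e).le

lemma cyclotomicValuation_one_sub_Q_zpow_eq_natAbs (e : ℤ) :
    cyclotomicValuation n (1 - Q ^ e) =
      cyclotomicValuation n (algebraMap ℚ[X] (RatFunc ℚ) (X ^ e.natAbs - 1)) := by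
  rw [← Valuation.map_neg _ (algebraMap ℚ[X] (RatFunc ℚ) _), ← one_sub_Q_pow]
  rcases e.eq_nat_or_neg with ⟨m, rfl | rfl⟩
  · simp
  · rw [Int.natAbs_neg, Int.natAbs_natCast, show (1 : RatFunc ℚ) - Q ^ (-(m : ℤ)) =
      Q ^ (-(m : ℤ)) * -(1 - Q ^ m) by
        rw [zpow_neg, zpow_natCast]
        field_simp [Q_ne_zero]
        ring,
      map_mul, cyclotomicValuation_Q_zpow, one_mul, Valuation.map_neg]

lemma cyclotomicValuation_one_sub_Q_zpow_of_not_dvd {e : ℤ} (he : ¬ (n : ℤ) ∣ e) :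
    cyclotomicValuation n (1 - Q ^ e) = 1 := by
  rw [Int.natCast_dvd] at he
  have hpos : 0 < e.natAbs := Nat.pos_of_ne_zero fun h ↦ he (h ▸ dvd_zero n)
  rw [cyclotomicValuation_one_sub_Q_zpow_eq_natAbs]
  refine (cyclotomicValuation_algebraMap_le_one _).antisymm (not_lt.mp ?_)
  rwa [cyclotomicValuation_algebraMap_lt_one_iff,
    cyclotomic_dvd_X_pow_sub_one_iff (NeZero.pos n) hpos]

lemma cyclotomicValuation_one_sub_Q_zpow_of_dvd {e : ℤ} (he : e ≠ 0) (h : (n : ℤ) ∣ e) :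
    cyclotomicValuation n (1 - Q ^ e) = exp (-1) := by
  have hpos : 0 < e.natAbs := Int.natAbs_pos.mpr he
  have hirr := cyclotomic.irreducible_rat (NeZero.pos n)
  obtain ⟨f, hf⟩ : cyclotomic n ℚ ∣ X ^ e.natAbs - 1 :=
    (cyclotomic_dvd_X_pow_sub_one_iff (NeZero.pos n) hpos).mpr (Int.natCast_dvd.mp h)
  have hsquarefree : Squarefree (X ^ e.natAbs - 1 : ℚ[X]) :=
    (X_pow_sub_one_separable_iff.mpr (by exact_mod_cast hpos.ne')).squarefree
  have hfval : cyclotomicValuation n (algebraMap ℚ[X] (RatFunc ℚ) f) = 1 := by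
    refine (cyclotomicValuation_algebraMap_le_one _).antisymm (not_lt.mp fun hlt ↦ ?_)
    rw [cyclotomicValuation_algebraMap_lt_one_iff] at hlt
    exact hirr.not_isUnit (hsquarefree _ (hf ▸ mul_dvd_mul_left _ hlt))
  rw [cyclotomicValuation_one_sub_Q_zpow_eq_natAbs, hf, map_mul, map_mul,
    cyclotomicValuation_cyclotomic, hfval, mul_one]

lemma cyclotomicValuation_one_sub_Q_zpow_le {e : ℤ} (h : (n : ℤ) ∣ e) :
    cyclotomicValuation n (1 - Q ^ e) ≤ exp (-1) := by
  obtain rfl | he := eq_or_ne e 0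
  · simp
  · exact (cyclotomicValuation_one_sub_Q_zpow_of_dvd he h).le

lemma cyclotomicValuation_one_sub_Q_pow_le_one (e : ℕ) :
    cyclotomicValuation n (1 - Q ^ e) ≤ 1 := by
  rw [← zpow_natCast]
  exact cyclotomicValuation_one_sub_Q_zpow_le_one e

lemma cyclotomicValuation_one_sub_Q_pow_of_not_dvd {e : ℕ} (he : ¬ n ∣ e) :
    cyclotomicValuation n (1 - Q ^ e) = 1 := by
  rw [← zpow_natCast]
  exact cyclotomicValuation_one_sub_Q_zpow_of_not_dvd (mod_cast he)

lemma cyclotomicValuation_one_sub_Q_pow_of_dvd {e : ℕ} (he : e ≠ 0) (h : n ∣ e) :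
    cyclotomicValuation n (1 - Q ^ e) = exp (-1) := by
  rw [← zpow_natCast]
  exact cyclotomicValuation_one_sub_Q_zpow_of_dvd (mod_cast he) (mod_cast h)

lemma cyclotomicValuation_one_sub_Q_pow_le {e : ℕ} (h : n ∣ e) :
    cyclotomicValuation n (1 - Q ^ e) ≤ exp (-1) := by
  rw [← zpow_natCast]
  exact cyclotomicValuation_one_sub_Q_zpow_le (mod_cast h)

lemma one_sub_Q_zpow_ne_zero {e : ℤ} (he : e ≠ 0) : 1 - Q ^ e ≠ 0 := by
  rw [← (cyclotomicValuation 1).ne_zero_iff,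
    cyclotomicValuation_one_sub_Q_zpow_of_dvd he (by simp)]
  exact exp_ne_zero

lemma one_sub_Q_pow_ne_zero {e : ℕ} (he : e ≠ 0) : 1 - Q ^ e ≠ 0 := by
  rw [← zpow_natCast]
  exact one_sub_Q_zpow_ne_zero (mod_cast he)

end Cyclotomic

section PerturbedRatio

variable {K Γ₀ : Type*} [Field K] [LinearOrderedCommGroupWithZero Γ₀]

lemma valuation_div_sub_div_le (v : Valuation K Γ₀) {a b c d : K} {γ : Γ₀}
    (hb : v b = 1) (hd : v d = 1) (hc : v c ≤ 1) (hac : v (a - c) ≤ γ) (hbd : v (b - d) ≤ γ) :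
    v (a / b - c / d) ≤ γ := by
  have hb0 : b ≠ 0 := (v.ne_zero_iff).mp (hb ▸ one_ne_zero)
  have hd0 : d ≠ 0 := (v.ne_zero_iff).mp (hd ▸ one_ne_zero)
  rw [div_sub_div _ _ hb0 hd0, map_div₀, map_mul, hb, hd, mul_one, div_one, mul_comm b c]
  rw [show a * d - c * b = (a - c) * d - c * (b - d) by ring]
  refine v.map_sub_le ?_ ?_
  · rw [map_mul, hd, mul_one]
    exact hac
  · rw [map_mul]
    exact (mul_le_mul' hc hbd).trans_eq (one_mul γ)

lemma dixonRatio_eq {q x y : K} (hq : q ≠ 0) (hy : y ≠ 0) (i : ℕ) :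
    dixonRatio (x * q) (y * q)⁻¹ (q ^ 4) (y / q ^ 2) i =
      (1 - x ^ 2 * q ^ (4 * i + 2)) * (1 - x * y * q ^ (4 * i + 2)) *
          (1 - y⁻¹ * q ^ (4 * i + 2)) /
        ((1 - 1 * q ^ (4 * i + 4)) * (1 - x ^ 2 * y * q ^ (4 * i + 4)) *
          (1 - x * y⁻¹ * q ^ (4 * i + 4))) * q := by
  have hpow : q ^ (4 * i + 4) = (q ^ 4) ^ (i + 1) := by ring
  have hs : (x * q) ^ 2 * (y / q ^ 2) * (q ^ 4) ^ (i + 1) =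
      x ^ 2 * y * q ^ (4 * i + 4) := by
    rw [hpow]
    field_simp
  have hw : x * q * (y * q)⁻¹ * (q ^ 4) ^ (i + 1) = x * y⁻¹ * q ^ (4 * i + 4) := by
    rw [hpow]
    field_simp
  have hnum : (1 - (x * q) ^ 2 * (q ^ 4) ^ i) * ((y * q)⁻¹ - x * q * (q ^ 4) ^ i) * q ^ 4 *
      (y / q ^ 2 - (q ^ 4) ^ i) = (1 - x ^ 2 * q ^ (4 * i + 2)) *
        (1 - x * y * q ^ (4 * i + 2)) * (1 - y⁻¹ * q ^ (4 * i + 2)) * q := by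
    field_simp
    ring
  rw [dixonRatio, dixonFactor, hs, hw, div_mul_div_comm, hnum, hpow]
  ring

/-- The three numerator parameters `x²`, `xy`, `y⁻¹` and the three denominator parameters `1`,
`x²y`, `xy⁻¹` both have product `x³`, which is what makes the first-order errors cancel. -/
lemma valuation_cube_sub_dixonRatio_le (v : Valuation K Γ₀) {q x y : K} {ε : Γ₀} {i : ℕ}
    (hε : ε < 1) (hq : v q = 1) (hx : v (1 - x) ≤ ε) (hy : v (1 - y) ≤ ε)
    (hi : v (1 - q ^ (4 * i + 4)) = 1) :
    v (((1 - x * q ^ (4 * i + 2)) / (1 - x * q ^ (4 * i + 4))) ^ 3 * q -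
      dixonRatio (x * q) (y * q)⁻¹ (q ^ 4) (y / q ^ 2) i) ≤ ε ^ 2 := by
  have hpow (j : ℕ) : v (q ^ j) = 1 := by rw [map_pow, hq, one_pow]
  have hq0 : q ≠ 0 := v.ne_zero_iff.mp (hq ▸ one_ne_zero)
  have hvy : v y = 1 := by simpa using v.map_one_sub_of_lt (hy.trans_lt hε)
  have hy0 : y ≠ 0 := v.ne_zero_iff.mp (hvy ▸ one_ne_zero)
  have hyinv : v (1 - y⁻¹) ≤ ε := by
    rwa [← div_self hy0, inv_eq_one_div, ← sub_div, map_div₀, hvy, div_one, v.map_sub_swap]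
  have hmul {a b : K} := valuation_one_sub_mul_le v hε.le (a := a) (b := b)
  have hxx : v (1 - x ^ 2) ≤ ε := sq x ▸ hmul hx hx
  have hden {a : K} (ha : v (1 - a) ≤ ε) : v (1 - a * q ^ (4 * i + 4)) = 1 :=
    valuation_one_sub_mul_eq_one v (ha.trans_lt hε) (hpow _).le hi
  have hnum {a : K} (ha : v (1 - a) ≤ ε) : v (1 - a * q ^ (4 * i + 2)) ≤ 1 :=
    valuation_one_sub_mul_le_one v (valuation_le_one_of_one_sub_le v hε.le ha) (hpow _).le
  have hone : v (1 - 1) ≤ ε := by simp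
  rw [dixonRatio_eq hq0 hy0, ← sub_mul, map_mul, hq, mul_one, div_pow]
  refine valuation_div_sub_div_le v ?_ ?_ ?_ ?_ ?_
  · rw [map_pow, hden hx, one_pow]
  · rw [map_mul, map_mul, hden hone, hden (hmul hxx hy), hden (hmul hx hyinv), one_mul, one_mul]
  · rw [map_mul, map_mul]
    exact mul_le_one' (mul_le_one' (hnum hxx) (hnum (hmul hx hy))) (hnum hyinv)
  · refine valuation_one_sub_cube_sub_triple_le v hε.le hxx (hmul hx hy) hyinv hx (hpow _).le ?_
    field_simp
  · refine valuation_one_sub_cube_sub_triple_le v hε.le hone (hmul hxx hy) (hmul hx hyinv) hx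
      (hpow _).le ?_
    field_simp

end PerturbedRatio

section Sum

open WithZero

/-- The ratio of consecutive terms of `(q²;q⁴)_k / (q⁴;q⁴)_k`. -/
noncomputable def qRatio (k : ℕ) : RatFunc ℚ := (1 - Q ^ (4 * k + 2)) / (1 - Q ^ (4 * k + 4))

/-- The `k`-th term of the sum in the theorem. -/
noncomputable def qSummand (k : ℕ) : RatFunc ℚ :=
  (1 + Q ^ (4 * k + 1)) * qPoch (Q ^ 2) (Q ^ 4) k ^ 3 * Q ^ k /
    ((1 + Q) * qPoch (Q ^ 4) (Q ^ 4) k ^ 3)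

/-- The term of a `q`-Dixon sum that approximates, up to a factor depending only on `k`, the
`(k + r)`-th term of the sum when `n ∣ k` and `r ≤ n / 2`. -/
noncomputable def blockDixonTerm (n k r : ℕ) : RatFunc ℚ :=
  dixonTerm (Q ^ (4 * k) * Q) (Q ^ (2 * n) * Q)⁻¹ (Q ^ 4) (Q ^ (2 * n) / Q ^ 2) r

lemma qPoch_div_qPoch (k : ℕ) :
    qPoch (Q ^ 2) (Q ^ 4) k / qPoch (Q ^ 4) (Q ^ 4) k = ∏ i ∈ range k, qRatio i := by
  rw [qPoch, qPoch, ← prod_div_distrib]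
  refine prod_congr rfl fun i _ ↦ ?_
  rw [qRatio]
  ring

lemma qSummand_eq (k : ℕ) :
    qSummand k = (1 + Q ^ (4 * k + 1)) / (1 + Q) * (∏ i ∈ range k, qRatio i) ^ 3 * Q ^ k := by
  rw [qSummand, ← qPoch_div_qPoch, div_pow, div_mul_div_comm, div_mul_eq_mul_div]

lemma qSummand_add (k r : ℕ) :
    qSummand (k + r) = (∏ i ∈ range k, qRatio i) ^ 3 * Q ^ k / (1 + Q) *
      ((1 + Q ^ (4 * (k + r) + 1)) * ∏ i ∈ range r, qRatio (k + i) ^ 3 * Q) := by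
  rw [qSummand_eq, prod_range_add, prod_mul_distrib, prod_pow, prod_const, card_range]
  ring

variable {n : ℕ}

lemma not_dvd_four_mul_add_four (hn : Odd n) {k i : ℕ} (hk : n ∣ k) (hi : i + 1 < n) :
    ¬ n ∣ 4 * (k + i) + 4 := by
  have hcoprime : n.Coprime 4 := (Nat.coprime_two_right.mpr hn).pow_right 2
  rw [show 4 * (k + i) + 4 = 4 * k + 4 * (i + 1) by ring, Nat.dvd_add_right (hk.mul_left 4),
    hcoprime.dvd_mul_left]
  exact Nat.not_dvd_of_pos_of_lt i.succ_pos hi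

lemma not_dvd_four_mul_add_five (hn : n % 4 = 3) {k i : ℕ} (hk : n ∣ k) (hi : i < n / 2) :
    ¬ n ∣ 4 * (k + i) + 5 := by
  rw [show 4 * (k + i) + 5 = 4 * k + (4 * i + 5) by ring, Nat.dvd_add_right (hk.mul_left 4)]
  rintro ⟨c, hc⟩
  have hc2 : c < 2 := by
    by_contra! h
    have := Nat.mul_le_mul_left n h
    omega
  interval_cases c <;> omega

lemma sum_blockDixonTerm (hn : Odd n) (k : ℕ) :
    ∑ r ∈ range (n / 2 + 1), blockDixonTerm n k r =
    (1 + Q ^ (4 * k + 1)) * ∏ i ∈ range (n / 2),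
      (1 - Q ^ (8 * k + 4 * i + 6)) * (1 - Q ^ (4 * i + 3 - 2 * n : ℤ)) /
        ((1 - Q ^ (4 * (k + i) + 4 - 2 * n : ℤ)) * (1 - Q ^ (4 * (k + i) + 5))) := by
  have hmod := Nat.odd_iff.mp hn
  have hP : Q ^ (2 * n) / Q ^ 2 = (Q ^ 4) ^ (n / 2) := by
    rw [div_eq_iff (pow_ne_zero 2 Q_ne_zero), ← pow_mul, ← pow_add]
    congr 1
    omega
  have hp (i : ℕ) : (Q ^ 4) ^ (i + 1) = Q ^ (4 * i + 4) := by ring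
  have hs (i : ℕ) : (Q ^ (4 * k) * Q) ^ 2 * (Q ^ 4) ^ (i + 1) = Q ^ (8 * k + 4 * i + 6) := by ring
  have hsp (i : ℕ) : Q ^ (4 * k) * Q * (Q ^ 4) ^ (i + 1) = Q ^ (4 * (k + i) + 5) := by ring
  have hw (i : ℕ) : (Q ^ (2 * n) * Q)⁻¹ * (Q ^ 4) ^ (i + 1) = Q ^ (4 * i + 3 - 2 * n : ℤ) := by
    rw [show (4 * i + 3 - 2 * n : ℤ) = (4 * i + 4 : ℕ) - (2 * n + 1 : ℕ) by push_cast; ring,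
      zpow_sub₀ Q_ne_zero, zpow_natCast, zpow_natCast]
    ring
  have hsw (i : ℕ) : Q ^ (4 * k) * Q * (Q ^ (2 * n) * Q)⁻¹ * (Q ^ 4) ^ (i + 1) =
      Q ^ (4 * (k + i) + 4 - 2 * n : ℤ) := by
    rw [mul_assoc, hw, ← pow_succ, ← zpow_natCast, ← zpow_add₀ Q_ne_zero]
    congr 1
    push_cast
    ring
  simp only [blockDixonTerm]
  rw [hP, sum_dixonTerm_pow]
  · simp only [hs, hw, hsw, hsp, pow_succ Q (4 * k)]
  · exact fun i ↦ hp i ▸ one_sub_Q_pow_ne_zero (by omega)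
  · exact fun i ↦ hs i ▸ one_sub_Q_pow_ne_zero (by omega)
  · exact fun i ↦ hsw i ▸ one_sub_Q_zpow_ne_zero (by omega)

variable [NeZero n]

lemma cyclotomicValuation_one_add_Q (hn : ¬ n ∣ 2) : cyclotomicValuation n (1 + Q) = 1 := by
  have hn' : ¬ n ∣ 1 := fun h ↦ hn (h.trans (one_dvd 2))
  have hone : cyclotomicValuation n (1 - Q ^ 1) = 1 :=
    cyclotomicValuation_one_sub_Q_pow_of_not_dvd hn'
  have htwo : cyclotomicValuation n (1 - Q ^ 2) = 1 :=
    cyclotomicValuation_one_sub_Q_pow_of_not_dvd hn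
  rwa [show 1 - Q ^ 2 = (1 + Q) * (1 - Q ^ 1) by ring, map_mul, hone, mul_one] at htwo

lemma cyclotomicValuation_qRatio_add_le_one (hn : Odd n) {k i : ℕ} (hk : n ∣ k)
    (hi : i + 1 < n) : cyclotomicValuation n (qRatio (k + i)) ≤ 1 := by
  have hden : cyclotomicValuation n (1 - Q ^ (4 * (k + i) + 4)) = 1 :=
    cyclotomicValuation_one_sub_Q_pow_of_not_dvd (not_dvd_four_mul_add_four hn hk hi)
  rw [qRatio, map_div₀, hden, div_one]
  exact cyclotomicValuation_one_sub_Q_pow_le_one _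

lemma cyclotomicValuation_prod_qRatio_add_le (hn : Odd n) {k r : ℕ} (hk : n ∣ k)
    (hr : n / 2 < r) (hrn : r < n) :
    cyclotomicValuation n (∏ i ∈ range r, qRatio (k + i)) ≤ exp (-1) := by
  refine valuation_prod_le _ (mem_range.mpr hr) (fun i hi ↦
    cyclotomicValuation_qRatio_add_le_one hn hk (by have := mem_range.mp hi; omega)) ?_
  have hden : cyclotomicValuation n (1 - Q ^ (4 * (k + n / 2) + 4)) = 1 :=
    cyclotomicValuation_one_sub_Q_pow_of_not_dvd (not_dvd_four_mul_add_four hn hk (by omega))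
  have hdvd : n ∣ 4 * (k + n / 2) + 2 := by
    have := Nat.odd_iff.mp hn
    rw [show 4 * (k + n / 2) + 2 = 4 * k + n * 2 by omega]
    exact dvd_add (hk.mul_left 4) (dvd_mul_right n 2)
  rw [qRatio, map_div₀, hden, div_one]
  exact cyclotomicValuation_one_sub_Q_pow_le hdvd

lemma cyclotomicValuation_prod_qRatio_le_one (hn : Odd n) (hn1 : 1 < n) {k : ℕ}
    (hk : n ∣ k) :
    cyclotomicValuation n (∏ i ∈ range k, qRatio i) ≤ 1 := by
  have hmod := Nat.odd_iff.mp hn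
  obtain ⟨j, rfl⟩ := hk
  induction j with
  | zero => simp
  | succ j ih =>
    have hden : cyclotomicValuation n (1 - Q ^ (4 * (n * j + (n - 1)) + 4)) = exp (-1) := by
      rw [show 4 * (n * j + (n - 1)) + 4 = 4 * (n * j + n) by omega, ← mul_add_one,
        mul_left_comm]
      exact cyclotomicValuation_one_sub_Q_pow_of_dvd (by simp [NeZero.ne n]) (dvd_mul_right n _)
    have hlast : cyclotomicValuation n (qRatio (n * j + (n - 1))) ≤ (exp (-1))⁻¹ := by
      rw [qRatio, map_div₀, hden, div_eq_mul_inv]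
      refine mul_le_of_le_one_left' ?_
      exact cyclotomicValuation_one_sub_Q_pow_le_one _
    have hinit : cyclotomicValuation n (∏ i ∈ range (n - 1), qRatio (n * j + i)) ≤ exp (-1) :=
      cyclotomicValuation_prod_qRatio_add_le hn (dvd_mul_right n j) (by omega) (by omega)
    have hblock : cyclotomicValuation n (∏ i ∈ range n, qRatio (n * j + i)) ≤ 1 := by
      rw [show range n = range (n - 1 + 1) by rw [Nat.sub_add_cancel NeZero.one_le],
        prod_range_succ, map_mul]
      exact (mul_le_mul' hinit hlast).trans_eq (mul_inv_cancel₀ exp_ne_zero)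
    rw [mul_add_one, prod_range_add, map_mul]
    exact mul_le_one' ih hblock

lemma cyclotomicValuation_one_add_Q_pow_le_one (e : ℕ) :
    cyclotomicValuation n (1 + Q ^ e) ≤ 1 :=
  Valuation.map_add_le _ (map_one _).le (by rw [map_pow, cyclotomicValuation_Q, one_pow])

lemma cyclotomicValuation_prefactor_le_one (hn : Odd n) (hn1 : 1 < n) {k : ℕ} (hk : n ∣ k) :
    cyclotomicValuation n ((∏ i ∈ range k, qRatio i) ^ 3 * Q ^ k / (1 + Q)) ≤ 1 := by
  have hn2 : ¬ n ∣ 2 := Nat.not_dvd_of_pos_of_lt two_pos (by have := Nat.odd_iff.mp hn; omega)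
  rw [map_div₀, cyclotomicValuation_one_add_Q hn2, div_one, map_mul, map_pow, map_pow,
    cyclotomicValuation_Q, one_pow, mul_one]
  exact pow_le_one' (cyclotomicValuation_prod_qRatio_le_one hn hn1 hk) 3

lemma cyclotomicValuation_qSummand_add_le (hn : Odd n) {k r : ℕ} (hk : n ∣ k)
    (hr : n / 2 < r) (hrn : r < n) :
    cyclotomicValuation n (qSummand (k + r)) ≤ exp (-1) ^ 2 := by
  rw [qSummand_add, map_mul, map_mul, prod_mul_distrib, prod_pow, prod_const, map_mul, map_pow,
    map_pow, cyclotomicValuation_Q, one_pow, mul_one]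
  have hprod : cyclotomicValuation n (∏ i ∈ range r, qRatio (k + i)) ^ 3 ≤ exp (-1) ^ 2 :=
    (pow_le_pow_left' (cyclotomicValuation_prod_qRatio_add_le hn hk hr hrn) 3).trans
      (pow_le_pow_right_of_le_one' exp_neg_one_lt_one.le (by norm_num))
  exact (mul_le_of_le_one_left' (cyclotomicValuation_prefactor_le_one hn (by omega) hk)).trans <|
    (mul_le_of_le_one_left' (cyclotomicValuation_one_add_Q_pow_le_one _)).trans hprod

lemma cyclotomicValuation_qRatio_cube_sub_dixonRatio_le (hn : Odd n) {k i : ℕ} (hk : n ∣ k)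
    (hi : i + 1 < n) :
    cyclotomicValuation n (qRatio (k + i) ^ 3 * Q -
      dixonRatio (Q ^ (4 * k) * Q) (Q ^ (2 * n) * Q)⁻¹ (Q ^ 4) (Q ^ (2 * n) / Q ^ 2) i) ≤
      exp (-1) ^ 2 := by
  have hratio : qRatio (k + i) =
      (1 - Q ^ (4 * k) * Q ^ (4 * i + 2)) / (1 - Q ^ (4 * k) * Q ^ (4 * i + 4)) := by
    rw [qRatio, ← pow_add, ← pow_add, mul_add, add_assoc, add_assoc]
  rw [hratio]
  exact valuation_cube_sub_dixonRatio_le _ exp_neg_one_lt_one cyclotomicValuation_Q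
    (cyclotomicValuation_one_sub_Q_pow_le (hk.mul_left 4))
    (cyclotomicValuation_one_sub_Q_pow_le (dvd_mul_left n 2))
    (cyclotomicValuation_one_sub_Q_pow_of_not_dvd
      (by simpa using not_dvd_four_mul_add_four hn (dvd_zero n) hi))

lemma cyclotomicValuation_sub_blockDixonTerm_le (hn : Odd n) {k r : ℕ} (hk : n ∣ k)
    (hr : r ≤ n / 2) :
    cyclotomicValuation n ((1 + Q ^ (4 * (k + r) + 1)) * ∏ i ∈ range r, qRatio (k + i) ^ 3 * Q -
      blockDixonTerm n k r) ≤ exp (-1) ^ 2 := by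
  have hratio {i : ℕ} (hi : i ∈ range r) : cyclotomicValuation n (qRatio (k + i) ^ 3 * Q) ≤ 1 := by
    have hin : i + 1 < n := by have := mem_range.mp hi; omega
    rw [map_mul, map_pow, cyclotomicValuation_Q, mul_one]
    exact pow_le_one' (cyclotomicValuation_qRatio_add_le_one hn hk hin) 3
  have hsub {i : ℕ} (hi : i ∈ range r) :=
    cyclotomicValuation_qRatio_cube_sub_dixonRatio_le hn hk
      (i := i) (by have := mem_range.mp hi; omega)
  have hdixon {i : ℕ} (hi : i ∈ range r) : cyclotomicValuation n
      (dixonRatio (Q ^ (4 * k) * Q) (Q ^ (2 * n) * Q)⁻¹ (Q ^ 4) (Q ^ (2 * n) / Q ^ 2) i) ≤ 1 := by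
    simpa using Valuation.map_sub_le _ (hratio hi)
      ((hsub hi).trans (pow_le_one' exp_neg_one_lt_one.le 2))
  have hfirst : Q ^ (4 * k) * Q * (Q ^ 4) ^ r = Q ^ (4 * (k + r) + 1) := by ring
  rw [blockDixonTerm, dixonTerm, hfirst, ← mul_sub, map_mul]
  exact (mul_le_of_le_one_left' (cyclotomicValuation_one_add_Q_pow_le_one _)).trans <|
    valuation_prod_sub_prod_le _ (fun _ ↦ hratio) (fun _ ↦ hdixon) fun _ ↦ hsub

lemma cyclotomicValuation_prod_one_sub_Q_le (hn : n % 4 = 3) {k : ℕ} (hk : n ∣ k) :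
    cyclotomicValuation n (∏ i ∈ range (n / 2),
      (1 - Q ^ (8 * k + 4 * i + 6)) * (1 - Q ^ (4 * i + 3 - 2 * n : ℤ)) /
        ((1 - Q ^ (4 * (k + i) + 4 - 2 * n : ℤ)) * (1 - Q ^ (4 * (k + i) + 5)))) ≤
      exp (-1) ^ 2 := by
  have hnum₁ : cyclotomicValuation n (∏ i ∈ range (n / 2), (1 - Q ^ (8 * k + 4 * i + 6))) ≤
      exp (-1) := by
    refine valuation_prod_le _ (i := n / 2 - 1) (mem_range.mpr (by omega))
      (fun i _ ↦ cyclotomicValuation_one_sub_Q_pow_le_one _) ?_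
    rw [show 8 * k + 4 * (n / 2 - 1) + 6 = 8 * k + 2 * n by omega]
    exact cyclotomicValuation_one_sub_Q_pow_le (dvd_add (hk.mul_left 8) (dvd_mul_left n 2))
  have hnum₂ : cyclotomicValuation n
      (∏ i ∈ range (n / 2), (1 - Q ^ (4 * i + 3 - 2 * n : ℤ))) ≤ exp (-1) := by
    refine valuation_prod_le _ (i := n / 4) (mem_range.mpr (by omega))
      (fun i _ ↦ cyclotomicValuation_one_sub_Q_zpow_le_one _) ?_
    exact cyclotomicValuation_one_sub_Q_zpow_le ⟨-1, by omega⟩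
  have hden₁ : cyclotomicValuation n
      (∏ i ∈ range (n / 2), (1 - Q ^ (4 * (k + i) + 4 - 2 * n : ℤ))) = 1 := by
    rw [map_prod]
    refine prod_eq_one fun i hi ↦ cyclotomicValuation_one_sub_Q_zpow_of_not_dvd ?_
    rw [dvd_sub_left (dvd_mul_left _ _)]
    have := mem_range.mp hi
    exact_mod_cast not_dvd_four_mul_add_four (Nat.odd_iff.mpr (by omega)) hk (by omega)
  have hden₂ : cyclotomicValuation n
      (∏ i ∈ range (n / 2), (1 - Q ^ (4 * (k + i) + 5))) = 1 := by
    rw [map_prod]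
    exact prod_eq_one fun i hi ↦ cyclotomicValuation_one_sub_Q_pow_of_not_dvd
      (not_dvd_four_mul_add_five hn hk (mem_range.mp hi))
  rw [prod_div_distrib, prod_mul_distrib, prod_mul_distrib, map_div₀, map_mul, map_mul, hden₁,
    hden₂, one_mul, div_one, sq]
  exact mul_le_mul' hnum₁ hnum₂

lemma cyclotomicValuation_sum_blockDixonTerm_le (hn : n % 4 = 3) {k : ℕ} (hk : n ∣ k) :
    cyclotomicValuation n (∑ r ∈ range (n / 2 + 1), blockDixonTerm n k r) ≤
      exp (-1) ^ 2 := by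
  rw [sum_blockDixonTerm (Nat.odd_iff.mpr (by omega)), map_mul]
  exact (mul_le_of_le_one_left' (cyclotomicValuation_one_add_Q_pow_le_one _)).trans
    (cyclotomicValuation_prod_one_sub_Q_le hn hk)

lemma cyclotomicValuation_sum_qSummand_add_half_le (hn : n % 4 = 3) {k : ℕ} (hk : n ∣ k) :
    cyclotomicValuation n (∑ r ∈ range (n / 2 + 1), qSummand (k + r)) ≤ exp (-1) ^ 2 := by
  have hodd : Odd n := Nat.odd_iff.mpr (by omega)
  simp only [qSummand_add, ← mul_sum]
  rw [map_mul]
  refine (mul_le_of_le_one_left' (cyclotomicValuation_prefactor_le_one hodd (by omega) hk)).trans ?_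
  have hsub := Valuation.map_sum_le (cyclotomicValuation n) fun r hr ↦
    cyclotomicValuation_sub_blockDixonTerm_le hodd hk (Nat.le_of_lt_succ (mem_range.mp hr))
  simpa [← sum_add_distrib] using
    Valuation.map_add_le _ hsub (cyclotomicValuation_sum_blockDixonTerm_le hn hk)

lemma cyclotomicValuation_sum_qSummand_add_le (hn : n % 4 = 3) {k : ℕ} (hk : n ∣ k) :
    cyclotomicValuation n (∑ r ∈ range n, qSummand (k + r)) ≤ exp (-1) ^ 2 := by
  have hodd : Odd n := Nat.odd_iff.mpr (by omega)
  have hhalf : n / 2 + 1 ≤ n := by omega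
  rw [← sum_range_add_sum_Ico _ hhalf]
  refine Valuation.map_add_le _ (cyclotomicValuation_sum_qSummand_add_half_le hn hk) ?_
  refine Valuation.map_sum_le _ fun r hr ↦ ?_
  obtain ⟨hr, hrn⟩ := mem_Ico.mp hr
  exact cyclotomicValuation_qSummand_add_le hodd hk hr hrn

lemma cyclotomicValuation_sum_qSummand_le (hn : n % 4 = 3) (m : ℕ) :
    cyclotomicValuation n (∑ k ∈ range (m * n), qSummand k) ≤ exp (-1) ^ 2 := by
  induction m with
  | zero => simp
  | succ m ih =>
    rw [add_one_mul, sum_range_add]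
    exact Valuation.map_add_le _ ih (cyclotomicValuation_sum_qSummand_add_le hn (dvd_mul_left n m))

end Sum

/-- For a nonnegative integer `m` and a positive integer `n ≡ 3 (mod 4)`,
`∑_{k=0}^{mn+(n-1)/2} (1+q^{4k+1})(q^2;q^4)_k^3 q^k / ((1+q)(q^4;q^4)_k^3) ≡ 0 (mod Φ_n(q)^2)`
in the localization of `ℚ[q]` at `Φ_n(q)`. -/
theorem stmt4 (m n : ℕ) (hn : 0 < n) (h : n % 4 = 3) :
    ∃ a b : Polynomial ℚ, ¬ (Polynomial.cyclotomic n ℚ ∣ b) ∧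
      (∑ k ∈ Finset.range (m * n + (n - 1) / 2 + 1),
          (1 + Q ^ (4 * k + 1)) * qPoch (Q ^ 2) (Q ^ 4) k ^ 3 * Q ^ k /
            ((1 + Q) * qPoch (Q ^ 4) (Q ^ 4) k ^ 3))
        * algebraMap (Polynomial ℚ) (RatFunc ℚ) b
      = algebraMap (Polynomial ℚ) (RatFunc ℚ) (Polynomial.cyclotomic n ℚ ^ 2 * a) := by
  have : NeZero n := ⟨hn.ne'⟩
  apply exists_mul_eq_of_cyclotomicValuation_le
  rw [show (n - 1) / 2 = n / 2 by omega, add_assoc, sum_range_add]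
  exact Valuation.map_add_le _ (cyclotomicValuation_sum_qSummand_le h m)
    (cyclotomicValuation_sum_qSummand_add_half_le h (dvd_mul_left n m))
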